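/- There exist constants C ≥ c > 0 such that for every x ∈ a, c · Π(x) e^{−(ρ, x⁺)} ≤ G_0(x) ≤ C · Π(x) e^{−(ρ, x⁺)}, where Π(x) = Π_{α∈R₀⁺, (α,x) ≥ 0} (1 + (α,x)) and x⁺ is the unique point of the Weyl orbit W·x lying in ā₊. -/

import Mathlib

open scoped BigOperators RealInnerProductSpace Classical

noncomputable section

variable {E : Type*} [NormedAddCommGroup E] [InnerProductSpace ℝ E] [FiniteDimensional ℝ E]

/-- The coroot `α∨ = 2α/|α|²`. -/
def coroot (α : E) : E := (2 / ⟪α, α⟫) • α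

/-- The orthogonal reflection `r_α x = x - (α∨, x) α`. -/
def rRefl (α : E) (x : E) : E := x - ⟪coroot α, x⟫ • α

/-- Data of an integral root system with positive subsystem and
a Weyl-invariant positive multiplicity function. -/
structure HOData (E : Type*) [NormedAddCommGroup E] [InnerProductSpace ℝ E] : Type _ where
  R : Finset E
  Rpos : Finset E
  k : E → ℝ
  k_pos : ∀ α ∈ R, 0 < k α
  root_ne_zero : ∀ α ∈ R, α ≠ 0
  pos_subset : Rpos ⊆ R
  pos_char : ∃ u : E, ∀ α ∈ R, (α ∈ Rpos ↔ 0 < ⟪α, u⟫)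
  pos_or_neg : ∀ α ∈ R, α ∈ Rpos ∨ -α ∈ Rpos
  neg_mem : ∀ α ∈ R, -α ∈ R
  integral : ∀ α ∈ R, ∀ β ∈ R, ∃ n : ℤ, ⟪coroot α, β⟫ = (n : ℝ)
  refl_mem : ∀ α ∈ R, ∀ β ∈ R, rRefl α β ∈ R
  k_inv : ∀ α ∈ R, ∀ β ∈ R, k (rRefl α β) = k β

/-- The Weyl group: the subgroup of linear isometries generated by the root reflections. -/
def weylGroup (D : HOData E) : Subgroup (E ≃ₗᵢ[ℝ] E) :=
  Subgroup.closure {w : E ≃ₗᵢ[ℝ] E | ∃ α ∈ D.R, ∀ x, w x = rRefl α x}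

/-- `ρ = (1/2) Σ_{α ∈ R⁺} k_α α`. -/
def rhoHO (D : HOData E) : E := (2:ℝ)⁻¹ • ∑ α ∈ D.Rpos, D.k α • α

/-- Regular points. -/
def HORegular (D : HOData E) (x : E) : Prop := ∀ α ∈ D.R, ⟪α, x⟫ ≠ 0

/-- The (open) positive Weyl chamber. -/
def posChamber (D : HOData E) : Set E := {x | ∀ α ∈ D.Rpos, 0 < ⟪α, x⟫}

/-- The positive indivisible roots `R₀⁺`. -/
def Rpos0 (D : HOData E) : Finset E := D.Rpos.filter (fun α => (2:ℝ)⁻¹ • α ∉ D.R)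

/-- The Opdam function `G_λ` for a real parameter `λ`: an analytic function,
normalized at `0`, satisfying the Cherednik differential-difference system. -/
def IsOpdamR (D : HOData E) (lam : E) (G : E → ℝ) : Prop :=
  AnalyticOnNhd ℝ G Set.univ ∧ G 0 = 1 ∧
  ∀ ξ x, HORegular D x →
    fderiv ℝ G x ξ =
      (∑ α ∈ D.Rpos, D.k α * ⟪α, ξ⟫ / (1 - Real.exp (-⟪α, x⟫)) * (G (rRefl α x) - G x))
      + ⟪rhoHO D + lam, ξ⟫ * G x

/-- The Opdam function `G_λ` for a complex parameter `λ = l1 + i l2 ∈ h`. -/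
def IsOpdamC (D : HOData E) (l1 l2 : E) (G : E → ℂ) : Prop :=
  AnalyticOnNhd ℝ G Set.univ ∧ G 0 = 1 ∧
  ∀ ξ x, HORegular D x →
    fderiv ℝ G x ξ =
      (∑ α ∈ D.Rpos, ((D.k α * ⟪α, ξ⟫ / (1 - Real.exp (-⟪α, x⟫)) : ℝ) : ℂ)
          * (G (rRefl α x) - G x))
      + (((⟪rhoHO D + l1, ξ⟫ : ℝ) : ℂ) + Complex.I * ((⟪l2, ξ⟫ : ℝ) : ℂ)) * G x

/-- The symmetrization `F(x) = |W|⁻¹ Σ_{w ∈ W} G(w x)` (real valued case). -/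
def Fsym (D : HOData E) [Fintype (weylGroup D)] (G : E → ℝ) (x : E) : ℝ :=
  (Fintype.card (weylGroup D) : ℝ)⁻¹ * ∑ w : weylGroup D, G (w.1 x)

/-- The symmetrization `F(x) = |W|⁻¹ Σ_{w ∈ W} G(w x)` (complex valued case). -/
def FsymC (D : HOData E) [Fintype (weylGroup D)] (G : E → ℂ) (x : E) : ℂ :=
  (Fintype.card (weylGroup D) : ℂ)⁻¹ * ∑ w : weylGroup D, G (w.1 x)

/-- `max_{w ∈ W} (w λ, x)`. -/
def maxW (D : HOData E) [Fintype (weylGroup D)] (lam x : E) : ℝ :=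
  ⨆ w : weylGroup D, ⟪w.1 lam, x⟫

set_option linter.unusedSectionVars false

section Reflections

lemma rRefl_eq (α x : E) : rRefl α x = x - (2 * ⟪α, x⟫ / ⟪α, α⟫) • α := by
  simp only [rRefl, coroot, real_inner_smul_left]
  congr 2
  ring

lemma inner_rRefl (α η x : E) :
    ⟪η, rRefl α x⟫ = ⟪η, x⟫ - 2 * ⟪α, η⟫ / ⟪α, α⟫ * ⟪α, x⟫ := by
  rw [rRefl_eq, inner_sub_right, real_inner_smul_right, real_inner_comm η α]
  ring

lemma rRefl_inner (α η x : E) : ⟪rRefl α η, x⟫ = ⟪η, rRefl α x⟫ := by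
  rw [inner_rRefl, rRefl_eq, inner_sub_left, real_inner_smul_left]

lemma rRefl_self {α : E} (h : α ≠ 0) : rRefl α α = -α := by
  have h0 : ⟪α, α⟫ ≠ 0 := inner_self_ne_zero.2 h
  rw [rRefl_eq, mul_div_assoc, div_self h0, mul_one, two_smul]
  abel

lemma rRefl_smul (α : E) (t : ℝ) (x : E) : rRefl α (t • x) = t • rRefl α x := by
  rw [rRefl_eq, rRefl_eq, real_inner_smul_right, smul_sub, smul_smul]
  congr 2
  ring

lemma rRefl_neg (α x : E) : rRefl α (-x) = -rRefl α x := by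
  have := rRefl_smul α (-1) x
  simpa using this

lemma rRefl_rRefl {α : E} (h : α ≠ 0) (x : E) : rRefl α (rRefl α x) = x := by
  have h0 : ⟪α, α⟫ ≠ 0 := inner_self_ne_zero.2 h
  rw [rRefl_eq α (rRefl α x), inner_rRefl, mul_div_assoc 2 ⟪α, α⟫, div_self h0, rRefl_eq, sub_sub,
    ← add_smul]
  have : 2 * ⟪α, x⟫ / ⟪α, α⟫ + 2 * (⟪α, x⟫ - 2 * 1 * ⟪α, x⟫) / ⟪α, α⟫ = 0 := by ring
  rw [this, zero_smul, sub_zero]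

lemma rRefl_smul_left {c : ℝ} (hc : c ≠ 0) (α x : E) : rRefl (c • α) x = rRefl α x := by
  rw [rRefl_eq, rRefl_eq, smul_smul, real_inner_smul_left, real_inner_smul_left,
    real_inner_smul_right]
  congr 2
  rcases eq_or_ne α 0 with h | h
  · simp [h]
  · have := inner_self_ne_zero (𝕜 := ℝ).2 h
    field_simp

/-- Every root reflection is induced by an element of the Weyl group. -/
lemma exists_weylGroup_eq_rRefl (D : HOData E) {α : E} (hα : α ∈ D.R) :
    ∃ s : weylGroup D, ∀ x, s.1 x = rRefl α x := by
  have h : ∀ x, (Submodule.reflection (Submodule.span ℝ {α})ᗮ) x = rRefl α x := by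
    intro x
    rw [Submodule.reflection_orthogonal_apply, Submodule.reflection_singleton_apply, rRefl_eq,
      real_inner_self_eq_norm_sq, two_smul, ← add_smul]
    simp only [neg_sub, RCLike.ofReal_real_eq_id, id]
    congr 2
    ring
  exact ⟨⟨_, Subgroup.subset_closure ⟨α, hα, h⟩⟩, h⟩

end Reflections

section Roots

variable (D : HOData E)

lemma k_neg {α : E} (hα : α ∈ D.R) : D.k (-α) = D.k α := by
  rw [← D.k_inv α hα α hα, rRefl_self (D.root_ne_zero α hα)]

lemma half_smul_mem_pos {α : E} (hα : α ∈ D.Rpos) (h : (2:ℝ)⁻¹ • α ∈ D.R) :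
    (2:ℝ)⁻¹ • α ∈ D.Rpos := by
  obtain ⟨u, hu⟩ := D.pos_char
  have := (hu _ (D.pos_subset hα)).1 hα
  rw [hu _ h, real_inner_smul_left]
  positivity

lemma neg_notMem_pos {α : E} (hα : α ∈ D.Rpos) : -α ∉ D.Rpos := by
  obtain ⟨u, hu⟩ := D.pos_char
  have h1 := (hu _ (D.pos_subset hα)).1 hα
  rw [hu _ (D.neg_mem _ (D.pos_subset hα)), inner_neg_left]
  linarith

lemma sum_roots_of_even (F : E → ℝ) (hF : ∀ α ∈ D.R, F (-α) = F α) :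
    ∑ α ∈ D.R, F α = 2 * ∑ α ∈ D.Rpos, F α := by
  rw [← Finset.sum_sdiff D.pos_subset, two_mul]
  congr 1
  refine Finset.sum_nbij' (fun α => -α) (fun α => -α) ?_ ?_ (by simp) (by simp) ?_
  · intro α hα
    rw [Finset.mem_sdiff] at hα
    exact (D.pos_or_neg α hα.1).resolve_left hα.2
  · intro α hα
    exact Finset.mem_sdiff.2 ⟨D.neg_mem _ (D.pos_subset hα), neg_notMem_pos D hα⟩
  · intro α hα
    exact (hF α (Finset.mem_sdiff.1 hα).1).symm

lemma sum_roots_rRefl {α : E} (hα : α ∈ D.R) (F : E → ℝ) :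
    ∑ β ∈ D.R, F (rRefl α β) = ∑ β ∈ D.R, F β :=
  Finset.sum_nbij' (rRefl α) (rRefl α) (fun β hβ => D.refl_mem α hα β hβ)
    (fun β hβ => D.refl_mem α hα β hβ) (fun β _ => rRefl_rRefl (D.root_ne_zero α hα) β)
    (fun β _ => rRefl_rRefl (D.root_ne_zero α hα) β) (fun _ _ => rfl)

lemma mem_Rpos0 {α : E} : α ∈ Rpos0 D ↔ α ∈ D.Rpos ∧ (2:ℝ)⁻¹ • α ∉ D.R := by
  simp [Rpos0]

lemma Rpos0_subset : Rpos0 D ⊆ D.Rpos := Finset.filter_subset _ _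

lemma half_rRefl_notMem {α η : E} (hα : α ∈ D.R) (hη : η ∈ Rpos0 D) :
    (2:ℝ)⁻¹ • rRefl α η ∉ D.R := by
  intro h
  have := D.refl_mem α hα _ h
  rw [rRefl_smul, rRefl_rRefl (D.root_ne_zero α hα)] at this
  exact ((mem_Rpos0 D).1 hη).2 this

lemma rRefl_mem_Rpos0 {α η : E} (hα : α ∈ D.R) (hη : η ∈ Rpos0 D) (h : rRefl α η ∈ D.Rpos) :
    rRefl α η ∈ Rpos0 D :=
  (mem_Rpos0 D).2 ⟨h, half_rRefl_notMem D hα hη⟩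

lemma neg_rRefl_mem_Rpos0 {α η : E} (hα : α ∈ D.R) (hη : η ∈ Rpos0 D) (h : rRefl α η ∉ D.Rpos) :
    -rRefl α η ∈ Rpos0 D := by
  have hR := D.refl_mem α hα η (D.pos_subset (Rpos0_subset D hη))
  refine (mem_Rpos0 D).2 ⟨(D.pos_or_neg _ hR).resolve_left h, fun h' => ?_⟩
  have := D.neg_mem _ h'
  rw [smul_neg, neg_neg] at this
  exact half_rRefl_notMem D hα hη this

lemma exists_indivisible {α : E} (hα : α ∈ D.Rpos) :
    ∃ β ∈ Rpos0 D, α = β ∨ α = (2:ℝ) • β := by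
  by_cases h : (2:ℝ)⁻¹ • α ∈ D.R
  · refine ⟨(2:ℝ)⁻¹ • α, (mem_Rpos0 D).2 ⟨half_smul_mem_pos D hα h, fun h' => ?_⟩,
      Or.inr (by simp [smul_smul])⟩
    obtain ⟨n, hn⟩ := D.integral α (D.pos_subset hα) _ h'
    have h0 : ⟪α, α⟫ ≠ 0 := inner_self_ne_zero.2 (D.root_ne_zero _ (D.pos_subset hα))
    simp only [coroot, real_inner_smul_left, real_inner_smul_right] at hn
    have h2 : (1:ℝ) = ((2 * n : ℤ) : ℝ) := by
      push_cast
      rw [← hn]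
      field_simp
    have h3 : (1:ℤ) = 2 * n := by exact_mod_cast h2
    lia
  · exact ⟨α, (mem_Rpos0 D).2 ⟨hα, h⟩, Or.inl rfl⟩

/-- Proportional indivisible positive roots coincide. -/
lemma eq_of_proportional {α η : E} (hα : α ∈ Rpos0 D) (hη : η ∈ Rpos0 D) {b : ℝ}
    (h : η = b • α) : η = α := by
  obtain ⟨u, hu⟩ := D.pos_char
  have hαR := D.pos_subset (Rpos0_subset D hα)
  have hηR := D.pos_subset (Rpos0_subset D hη)
  have h1 := (hu _ hαR).1 (Rpos0_subset D hα)
  have h2 := (hu _ hηR).1 (Rpos0_subset D hη)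
  have hb : 0 < b := by
    rw [h, real_inner_smul_left] at h2
    exact pos_of_mul_pos_left h2 h1.le
  obtain ⟨n, hn⟩ := D.integral α hαR η hηR
  obtain ⟨m, hm⟩ := D.integral η hηR α hαR
  have h0 : ⟪α, α⟫ ≠ 0 := inner_self_ne_zero.2 (D.root_ne_zero _ hαR)
  have hn' : 2 * b = n := by
    rw [← hn, h]
    simp only [coroot, real_inner_smul_left, real_inner_smul_right]
    field_simp
  have hm' : 2 = m * b := by
    rw [← hm, h]
    simp only [coroot, real_inner_smul_left, real_inner_smul_right]
    field_simp
  have hnm : n * m = 4 := by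
    have : (n:ℝ) * m = 4 := by rw [← hn']; linarith
    exact_mod_cast this
  have hn0 : 0 < n := by
    have : (0:ℝ) < n := by rw [← hn']; positivity
    exact_mod_cast this
  have hn4 : n ≤ 4 := Int.le_of_dvd (by norm_num) ⟨m, hnm.symm⟩
  interval_cases n
  · exfalso
    apply ((mem_Rpos0 D).1 hα).2
    have : b = 2⁻¹ := by push_cast at hn'; linarith
    rwa [← this, ← h]
  · have : b = 1 := by push_cast at hn'; linarith
    rw [h, this, one_smul]
  · lia
  · exfalso
    apply ((mem_Rpos0 D).1 hη).2
    have : b = 2 := by push_cast at hn'; linarith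
    rwa [h, this, smul_smul, inv_mul_cancel₀ two_ne_zero, one_smul]

/-- There is a system of simple roots: each simple reflection permutes the other indivisible
positive roots, and the indivisible positive roots are nonnegative combinations of simple ones. -/
lemma exists_simple :
    ∃ B ⊆ Rpos0 D, (∀ α ∈ B, ∀ η ∈ Rpos0 D, η ≠ α → rRefl α η ∈ D.Rpos) ∧
      ∀ γ ∈ Rpos0 D, ∃ n : E → ℝ, (∀ α, 0 ≤ n α) ∧ γ = ∑ α ∈ B, n α • α := by
  obtain ⟨u, hu⟩ := D.pos_char
  have hu' : ∀ α ∈ Rpos0 D, 0 < ⟪α, u⟫ := fun α hα =>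
    (hu α (D.pos_subset (Rpos0_subset D hα))).1 (Rpos0_subset D hα)
  let S : Finset (Finset E) := (Rpos0 D).powerset.filter fun B =>
    ∀ γ ∈ Rpos0 D, ∃ n : E → ℝ, (∀ α, 0 ≤ n α) ∧ γ = ∑ α ∈ B, n α • α
  have hS : S.Nonempty := by
    refine ⟨Rpos0 D, Finset.mem_filter.2 ⟨Finset.mem_powerset_self _, fun γ hγ => ?_⟩⟩
    refine ⟨fun α => if α = γ then 1 else 0, fun α => by dsimp only; split_ifs <;> simp, ?_⟩
    simp [ite_smul, Finset.sum_ite_eq', hγ]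
  obtain ⟨B, hBS, hmin⟩ := S.exists_min_image Finset.card hS
  obtain ⟨hB, hspan⟩ := Finset.mem_filter.1 hBS
  rw [Finset.mem_powerset] at hB
  refine ⟨B, hB, fun α hα η hη hne => ?_, hspan⟩
  by_contra hcon
  have hα0 := hB hα
  have hαR := D.pos_subset (Rpos0_subset D hα0)
  obtain ⟨b, hb, hηb⟩ := hspan η hη
  obtain ⟨b', hb', hηb'⟩ := hspan _ (neg_rRefl_mem_Rpos0 D hαR hη hcon)
  set c := 2 * ⟪α, η⟫ / ⟪α, α⟫
  have hsum : c • α = ∑ β ∈ B, (b β + b' β) • β := by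
    simp only [add_smul, Finset.sum_add_distrib]
    rw [← hηb, ← hηb', rRefl_eq]
    abel
  rw [← Finset.add_sum_erase _ _ hα] at hsum
  set r := c - (b α + b' α) with hr
  have hsum' : r • α = ∑ β ∈ B.erase α, (b β + b' β) • β := by
    rw [hr, sub_smul, hsum]
    abel
  rcases le_or_gt r 0 with h | h
  · have hin : r * ⟪α, u⟫ = ∑ β ∈ B.erase α, (b β + b' β) * ⟪β, u⟫ := by
      rw [← real_inner_smul_left, hsum', sum_inner]
      simp [real_inner_smul_left]
    have hnn : ∀ β ∈ B.erase α, 0 ≤ (b β + b' β) * ⟪β, u⟫ := fun β hβ =>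
      mul_nonneg (add_nonneg (hb β) (hb' β)) (hu' β (hB (Finset.mem_of_mem_erase hβ))).le
    have hz : ∑ β ∈ B.erase α, (b β + b' β) * ⟪β, u⟫ = 0 :=
      le_antisymm (hin ▸ mul_nonpos_of_nonpos_of_nonneg h (hu' α hα0).le)
        (Finset.sum_nonneg hnn)
    have hb0 : ∀ β ∈ B.erase α, b β = 0 := by
      intro β hβ
      have h1 := (Finset.sum_eq_zero_iff_of_nonneg hnn).1 hz β hβ
      have h2 := (mul_eq_zero.1 h1).resolve_right
        (hu' β (hB (Finset.mem_of_mem_erase hβ))).ne'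
      linarith [hb β, hb' β]
    apply hne
    apply eq_of_proportional D hα0 hη (b := b α)
    rw [hηb, ← Finset.add_sum_erase _ _ hα, Finset.sum_eq_zero, add_zero]
    intro β hβ
    rw [hb0 β hβ, zero_smul]
  · have hαe : α = ∑ β ∈ B.erase α, (r⁻¹ * (b β + b' β)) • β := by
      simp only [mul_smul, ← Finset.smul_sum]
      rw [← hsum', smul_smul, inv_mul_cancel₀ h.ne', one_smul]
    have hmem : B.erase α ∈ S := by
      refine Finset.mem_filter.2
        ⟨Finset.mem_powerset.2 ((Finset.erase_subset _ _).trans hB), fun γ hγ => ?_⟩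
      obtain ⟨n, hn, hγn⟩ := hspan γ hγ
      refine ⟨fun β => n α * (r⁻¹ * (b β + b' β)) + n β, fun β => ?_, ?_⟩
      · have := hb β
        have := hb' β
        have := hn α
        have := hn β
        positivity
      · simp only [add_smul, Finset.sum_add_distrib]
        simp only [mul_smul (n α), ← Finset.smul_sum]
        rw [← hαe, hγn, ← Finset.add_sum_erase _ _ hα]
    have h1 := hmin _ hmem
    have h2 := Finset.card_erase_lt_of_mem hα
    lia

end Roots

section PositiveProduct

variable (D : HOData E) (A : ℝ)

/-- The product of `1 + A (α, x)⁺` over the positive indivisible roots. -/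
def posProd (x : E) : ℝ := ∏ α ∈ Rpos0 D, (1 + A * max ⟪α, x⟫ 0)

variable {A}

lemma posProd_pos (hA : 0 ≤ A) (x : E) : 0 < posProd D A x :=
  Finset.prod_pos fun α _ => by positivity

/-- A reflection exchanges the indivisible positive roots that stay positive, and acts by
`η ↦ -r_α η` on the others. -/
lemma posProd_rRefl {α : E} (hα : α ∈ D.R) (x : E) :
    posProd D A (rRefl α x) =
      (∏ η ∈ (Rpos0 D).filter (fun η => rRefl α η ∉ D.Rpos), (1 + A * max (-⟪η, x⟫) 0)) *
      ∏ η ∈ (Rpos0 D).filter (fun η => ¬ rRefl α η ∉ D.Rpos), (1 + A * max ⟪η, x⟫ 0) := by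
  have hne := D.root_ne_zero α hα
  rw [posProd, ← Finset.prod_filter_mul_prod_filter_not (Rpos0 D) (fun η => rRefl α η ∉ D.Rpos)]
  congr 1
  · have hmem : ∀ η ∈ (Rpos0 D).filter (fun η => rRefl α η ∉ D.Rpos),
        -rRefl α η ∈ (Rpos0 D).filter (fun η => rRefl α η ∉ D.Rpos) := by
      intro η hη
      obtain ⟨h1, h2⟩ := Finset.mem_filter.1 hη
      refine Finset.mem_filter.2 ⟨neg_rRefl_mem_Rpos0 D hα h1 h2, ?_⟩
      rw [rRefl_neg, rRefl_rRefl hne]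
      exact neg_notMem_pos D (Rpos0_subset D h1)
    have hinv : ∀ η, -rRefl α (-rRefl α η) = η := fun η => by
      rw [rRefl_neg, rRefl_rRefl hne, neg_neg]
    refine Finset.prod_nbij' (fun η => -rRefl α η) (fun η => -rRefl α η) hmem hmem
      (fun η _ => hinv η) (fun η _ => hinv η) fun η _ => ?_
    rw [inner_neg_left, neg_neg, rRefl_inner]
  · have hmem : ∀ η ∈ (Rpos0 D).filter (fun η => ¬ rRefl α η ∉ D.Rpos),
        rRefl α η ∈ (Rpos0 D).filter (fun η => ¬ rRefl α η ∉ D.Rpos) := by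
      intro η hη
      obtain ⟨h1, h2⟩ := Finset.mem_filter.1 hη
      rw [not_not] at h2
      refine Finset.mem_filter.2 ⟨rRefl_mem_Rpos0 D hα h1 h2, ?_⟩
      rw [rRefl_rRefl hne, not_not]
      exact Rpos0_subset D h1
    refine Finset.prod_nbij' (rRefl α) (rRefl α) hmem hmem
      (fun η _ => rRefl_rRefl hne η) (fun η _ => rRefl_rRefl hne η) fun η _ => ?_
    rw [rRefl_inner]

lemma self_mem_filter {α : E} (hα : α ∈ Rpos0 D) :
    α ∈ (Rpos0 D).filter (fun η => rRefl α η ∉ D.Rpos) := by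
  refine Finset.mem_filter.2 ⟨hα, ?_⟩
  rw [rRefl_self (D.root_ne_zero α (D.pos_subset (Rpos0_subset D hα)))]
  exact neg_notMem_pos D (Rpos0_subset D hα)

lemma posProd_rRefl_mul_le (hA : 0 ≤ A) {α : E} (hα : α ∈ Rpos0 D) {x : E} (hx : 0 ≤ ⟪α, x⟫) :
    posProd D A (rRefl α x) * (1 + A * ⟪α, x⟫) ≤ posProd D A x := by
  have hαR := D.pos_subset (Rpos0_subset D hα)
  have hne := D.root_ne_zero α hαR
  obtain ⟨u, hu⟩ := D.pos_char
  have hαu := (hu α hαR).1 (Rpos0_subset D hα)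
  rw [posProd_rRefl D hαR, posProd,
    ← Finset.prod_filter_mul_prod_filter_not (Rpos0 D) (fun η => rRefl α η ∉ D.Rpos), mul_right_comm]
  refine mul_le_mul_of_nonneg_right ?_ (Finset.prod_nonneg fun η _ => by positivity)
  rw [← Finset.mul_prod_erase _ _ (self_mem_filter D hα),
    ← Finset.mul_prod_erase _ (fun η => 1 + A * max ⟪η, x⟫ 0) (self_mem_filter D hα),
    max_eq_right (by linarith : -⟪α, x⟫ ≤ 0), max_eq_left hx, mul_zero, add_zero, one_mul, mul_comm]
  refine mul_le_mul_of_nonneg_left ?_ (by positivity)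
  set Q := ((Rpos0 D).filter (fun η => rRefl α η ∉ D.Rpos)).erase α
  have hmem : ∀ η ∈ Q, -rRefl α η ∈ Q := by
    intro η hη
    obtain ⟨h0, h⟩ := Finset.mem_erase.1 hη
    obtain ⟨h1, h2⟩ := Finset.mem_filter.1 h
    refine Finset.mem_erase.2 ⟨fun h' => h0 ?_,
      Finset.mem_filter.2 ⟨neg_rRefl_mem_Rpos0 D hαR h1 h2, ?_⟩⟩
    · rw [← rRefl_rRefl hne η, neg_eq_iff_eq_neg.1 h', rRefl_neg, rRefl_self hne, neg_neg]
    · rw [rRefl_neg, rRefl_rRefl hne]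
      exact neg_notMem_pos D (Rpos0_subset D h1)
  have hinv : ∀ η, -rRefl α (-rRefl α η) = η := fun η => by
    rw [rRefl_neg, rRefl_rRefl hne, neg_neg]
  have hswap : ∀ F : E → ℝ, (∏ η ∈ Q, F η) ^ 2 = ∏ η ∈ Q, F η * F (-rRefl α η) := by
    intro F
    rw [sq, Finset.prod_mul_distrib]
    congr 1
    exact Finset.prod_nbij' (fun η => -rRefl α η) (fun η => -rRefl α η) hmem hmem
      (fun η _ => hinv η) (fun η _ => hinv η) fun η _ => by rw [hinv]
  refine (sq_le_sq₀ (Finset.prod_nonneg fun η _ => by positivity)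
    (Finset.prod_nonneg fun η _ => by positivity)).1 ?_
  rw [hswap, hswap]
  refine Finset.prod_le_prod (fun η _ => by positivity) fun η hη => ?_
  obtain ⟨h1, h2⟩ := Finset.mem_filter.1 (Finset.mem_of_mem_erase hη)
  have hηR := D.pos_subset (Rpos0_subset D h1)
  have hηu := (hu η hηR).1 (Rpos0_subset D h1)
  rw [hu _ (D.refl_mem α hαR η hηR), not_lt, rRefl_inner, inner_rRefl] at h2
  have hc : 0 ≤ 2 * ⟪α, η⟫ / ⟪α, α⟫ := by
    by_contra hc
    nlinarith
  rw [inner_neg_left, rRefl_inner, inner_rRefl]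
  have hs := mul_nonneg hc hx
  generalize 2 * ⟪α, η⟫ / ⟪α, α⟫ * ⟪α, x⟫ = s at hs
  generalize ⟪η, x⟫ = p
  rcases le_total p 0 with hp | hp
  · rw [max_eq_left (by linarith : 0 ≤ -p), max_eq_right (by linarith : -(-(p - s)) ≤ 0),
      max_eq_right hp, max_eq_left (by linarith : 0 ≤ -(p - s))]
    nlinarith
  · rw [max_eq_right (by linarith : -p ≤ 0), max_eq_left hp, neg_neg]
    rcases le_total (p - s) 0 with hq | hq
    · rw [max_eq_right hq, max_eq_left (by linarith : 0 ≤ -(p - s))]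
      nlinarith [mul_nonneg hA hp, mul_nonneg hA (by linarith : 0 ≤ -(p - s)),
        mul_nonneg (mul_nonneg hA hp) (mul_nonneg hA (by linarith : 0 ≤ -(p - s)))]
    · rw [max_eq_left hq, max_eq_right (by linarith : -(p - s) ≤ 0)]
      nlinarith

lemma posProd_rRefl_simple {α : E} (hα : α ∈ Rpos0 D)
    (hs : ∀ η ∈ Rpos0 D, η ≠ α → rRefl α η ∈ D.Rpos) {x : E} (hx : 0 ≤ ⟪α, x⟫) :
    posProd D A (rRefl α x) * (1 + A * ⟪α, x⟫) = posProd D A x := by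
  have hαR := D.pos_subset (Rpos0_subset D hα)
  have hf : (Rpos0 D).filter (fun η => rRefl α η ∉ D.Rpos) = {α} := by
    refine Finset.eq_singleton_iff_unique_mem.2 ⟨self_mem_filter D hα, fun η hη => ?_⟩
    obtain ⟨h1, h2⟩ := Finset.mem_filter.1 hη
    by_contra h
    exact h2 (hs η h1 h)
  rw [posProd_rRefl D hαR, posProd,
    ← Finset.prod_filter_mul_prod_filter_not (Rpos0 D) (fun η => rRefl α η ∉ D.Rpos), mul_right_comm,
    hf, Finset.prod_singleton, Finset.prod_singleton, max_eq_left hx,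
    max_eq_right (by linarith : -⟪α, x⟫ ≤ 0)]
  ring

lemma exists_posProd_rRefl_le_pow (hA : 0 ≤ A) :
    ∃ c : ℝ, 0 ≤ c ∧ ∀ α ∈ D.R, ∀ x,
      posProd D A (rRefl α x) ≤ (1 + c * |⟪α, x⟫|) ^ (Rpos0 D).card * posProd D A x := by
  set M := ∑ α ∈ D.R, ∑ η ∈ Rpos0 D, |2 * ⟪α, η⟫ / ⟪α, α⟫|
  have hM : ∀ α ∈ D.R, ∀ η ∈ Rpos0 D, |2 * ⟪α, η⟫ / ⟪α, α⟫| ≤ M := by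
    intro α hα η hη
    have h1 := Finset.single_le_sum (f := fun η => |2 * ⟪α, η⟫ / ⟪α, α⟫|)
      (fun _ _ => abs_nonneg _) hη
    have h2 := Finset.single_le_sum (f := fun α => ∑ η ∈ Rpos0 D, |2 * ⟪α, η⟫ / ⟪α, α⟫|)
      (fun _ _ => Finset.sum_nonneg fun _ _ => abs_nonneg _) hα
    exact h1.trans h2
  have hM0 : 0 ≤ M := Finset.sum_nonneg fun _ _ => Finset.sum_nonneg fun _ _ => abs_nonneg _
  refine ⟨A * M, by positivity, fun α hα x => ?_⟩
  rw [posProd, posProd, ← Finset.prod_const, ← Finset.prod_mul_distrib]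
  refine Finset.prod_le_prod (fun η _ => by positivity) fun η hη => ?_
  have h1 : ⟪η, rRefl α x⟫ ≤ max ⟪η, x⟫ 0 + M * |⟪α, x⟫| := by
    rw [inner_rRefl]
    have h2 := mul_le_mul_of_nonneg_right (hM α hα η hη) (abs_nonneg ⟪α, x⟫)
    rw [← abs_mul] at h2
    linarith [le_max_left ⟪η, x⟫ 0, neg_abs_le (2 * ⟪α, η⟫ / ⟪α, α⟫ * ⟪α, x⟫)]
  have hp : 0 ≤ max ⟪η, x⟫ 0 := le_max_right _ _
  have hq : 0 ≤ M * |⟪α, x⟫| := by positivity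
  have h3 : max ⟪η, rRefl α x⟫ 0 ≤ max ⟪η, x⟫ 0 + M * |⟪α, x⟫| := max_le h1 (by positivity)
  have h4 := mul_le_mul_of_nonneg_left h3 hA
  have h5 := mul_nonneg (mul_nonneg hA hp) (mul_nonneg hA hq)
  nlinarith

end PositiveProduct

section RealEstimates

lemma exists_pow_sub_one_le (m : ℕ) {c : ℝ} (hc : 0 ≤ c) :
    ∃ K : ℝ, 0 ≤ K ∧ ∀ τ : ℝ, 0 < τ →
      τ / (Real.exp τ - 1) * ((1 + c * τ) ^ m - 1) ≤ K * (τ * Real.exp (-τ / 4)) := by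
  set M : ℝ := (1 + 4 * (m + 1) * c) ^ m
  refine ⟨m * c * M, by positivity, fun τ hτ => ?_⟩
  have h1 : (1 + c * τ) ^ m ≤ M * Real.exp (τ / 4) := by
    have h2 : 1 + c * τ ≤ (1 + 4 * (m + 1) * c) * Real.exp (τ / (4 * (m + 1))) := by
      have h3 := Real.add_one_le_exp (τ / (4 * (m + 1)))
      have h4 : (1 + 4 * (m + 1) * c) * (τ / (4 * (m + 1)) + 1) =
          1 + c * τ + τ / (4 * (m + 1)) + 4 * (m + 1) * c := by
        field_simp
        ring
      have h5 : 0 ≤ τ / (4 * ((m:ℝ) + 1)) + 4 * (m + 1) * c := by positivity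
      have h6 := mul_le_mul_of_nonneg_left h3 (by positivity : 0 ≤ 1 + 4 * (m + 1) * c)
      linarith
    refine (pow_le_pow_left₀ (by positivity) h2 m).trans ?_
    rw [mul_pow, ← Real.exp_nat_mul]
    refine mul_le_mul_of_nonneg_left (Real.exp_le_exp.2 ?_) (by positivity)
    rw [mul_div_assoc', div_le_div_iff₀ (by positivity) (by positivity)]
    nlinarith
  have h2 : (1 + c * τ) ^ m - 1 ≤ m * c * τ * (1 + c * τ) ^ m := by
    have hz : 0 ≤ c * τ := by positivity
    have hb := one_add_mul_le_pow (a := -(c * τ) / (1 + c * τ))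
      (by rw [le_div_iff₀ (by positivity)]; linarith) m
    have he : 1 + -(c * τ) / (1 + c * τ) = (1 + c * τ)⁻¹ := by
      field_simp
      ring
    rw [he, inv_pow] at hb
    have h3 : -(c * τ) ≤ -(c * τ) / (1 + c * τ) := by
      rw [le_div_iff₀ (by positivity)]
      nlinarith
    have h4 : 1 - m * (c * τ) ≤ ((1 + c * τ) ^ m)⁻¹ := by
      have := mul_le_mul_of_nonneg_left h3 (Nat.cast_nonneg (α := ℝ) m)
      linarith
    have hp : 0 < (1 + c * τ) ^ m := by positivity
    have h5 := mul_le_mul_of_nonneg_right h4 hp.le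
    rw [inv_mul_cancel₀ hp.ne'] at h5
    linarith
  have hsinh : τ * Real.exp (τ / 2) ≤ Real.exp τ - 1 := by
    have h3 := Real.self_le_sinh_iff.2 (by positivity : 0 ≤ τ / 2)
    rw [Real.sinh_eq] at h3
    have h4 : Real.exp τ = Real.exp (τ / 2) * Real.exp (τ / 2) := by
      rw [← Real.exp_add]; ring_nf
    have h5 : Real.exp (-(τ / 2)) * Real.exp (τ / 2) = 1 := by
      rw [← Real.exp_add]; simp
    nlinarith [Real.exp_pos (τ / 2)]
  have hE : 0 < Real.exp τ - 1 := lt_of_lt_of_le (by positivity) hsinh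
  rw [div_mul_eq_mul_div, div_le_iff₀ hE]
  have hexp : Real.exp (-τ / 4) * Real.exp (τ / 2) = Real.exp (τ / 4) := by
    rw [← Real.exp_add]; ring_nf
  calc τ * ((1 + c * τ) ^ m - 1) ≤ τ * (m * c * τ * (M * Real.exp (τ / 4))) := by
        refine mul_le_mul_of_nonneg_left (h2.trans ?_) hτ.le
        exact mul_le_mul_of_nonneg_left h1 (by positivity)
    _ = m * c * M * (τ * Real.exp (-τ / 4)) * (τ * Real.exp (τ / 2)) := by
        rw [← hexp]; ring
    _ ≤ _ := mul_le_mul_of_nonneg_left hsinh (by positivity)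

/-- Componentwise positivity for cooperative linear differential inequalities on `[0, ∞)` whose
diagonal may have a singularity of order `1 / t` at the origin. -/
lemma pos_of_cooperative {ι : Type*} [Finite ι] (d d' : ι → ℝ → ℝ) (N : ι → ℝ) {K : ℝ}
    (hK : 0 ≤ K) (hcont : ∀ i, Continuous (d i)) (h0 : ∀ i, 0 < d i 0)
    (hd : ∀ i, ∀ t, 0 < t → HasDerivAt (d i) (d' i t) t)
    (hle : ∀ t, 0 < t → (∀ i, 0 ≤ d i t) → ∀ i, -(K / t + N i) * d i t ≤ d' i t)
    (i : ι) {t : ℝ} (ht : 0 ≤ t) : 0 < d i t := by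
  by_contra hneg
  have hcl : IsClosed (⋃ j, {s | d j s ≤ 0}) :=
    isClosed_iUnion_of_finite fun j => isClosed_le (hcont j) continuous_const
  obtain ⟨t₀, ⟨⟨ht₀, -⟩, hmem⟩, hleast⟩ :=
    (isCompact_Icc.inter_right hcl : IsCompact (Set.Icc 0 t ∩ ⋃ j, {s | d j s ≤ 0})).exists_isLeast
      ⟨t, ⟨ht, le_rfl⟩, Set.mem_iUnion.2 ⟨i, not_lt.1 hneg⟩⟩
  obtain ⟨j, hj⟩ := Set.mem_iUnion.1 hmem
  have hj' : d j t₀ ≤ 0 := hj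
  have ht₀' : 0 < t₀ := by
    rcases ht₀.eq_or_lt with h | h
    · rw [← h] at hj'
      exact absurd (h0 j) hj'.not_gt
    · exact h
  have hpos : ∀ s, 0 ≤ s → s < t₀ → ∀ l, 0 < d l s := by
    intro s hs hst l
    by_contra h
    have hle' : t₀ ≤ t := by
      by_contra h'
      have := hleast ⟨⟨ht, le_rfl⟩, Set.mem_iUnion.2 ⟨i, not_lt.1 hneg⟩⟩
      exact h' this
    exact absurd (hleast ⟨⟨hs, hst.le.trans hle'⟩, Set.mem_iUnion.2 ⟨l, not_lt.1 h⟩⟩) hst.not_ge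
  set M := K / (t₀ / 2) + N j
  have hderiv : ∀ s, 0 < s → HasDerivAt (fun s => d j s * Real.exp (M * s))
      (d' j s * Real.exp (M * s) + d j s * (Real.exp (M * s) * (M * 1))) s := fun s hs =>
    (hd j s hs).mul ((hasDerivAt_id' s).const_mul M).exp
  have hmono : MonotoneOn (fun s => d j s * Real.exp (M * s)) (Set.Icc (t₀ / 2) t₀) := by
    refine monotoneOn_of_deriv_nonneg (convex_Icc _ _) ?_ ?_ ?_
    · exact ((hcont j).mul (by fun_prop)).continuousOn
    · intro s hs
      rw [interior_Icc] at hs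
      exact (hderiv s (by linarith [hs.1])).differentiableAt.differentiableWithinAt
    · intro s hs
      rw [interior_Icc] at hs
      have hs0 : 0 < s := by linarith [hs.1]
      rw [(hderiv s hs0).deriv]
      have h1 := hle s hs0 (fun l => (hpos s hs0.le hs.2 l).le) j
      have h2 : K / s ≤ K / (t₀ / 2) := by gcongr; exact hs.1.le
      have h3 := mul_le_mul_of_nonneg_right h2 (hpos s hs0.le hs.2 j).le
      have h4 : 0 ≤ d' j s + M * d j s := by
        simp only [M]
        linarith
      have h5 := mul_nonneg h4 (Real.exp_pos (M * s)).le
      linarith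
  have h1 := hmono ⟨le_rfl, by linarith⟩ ⟨by linarith, le_rfl⟩ (by linarith : t₀ / 2 ≤ t₀)
  have h2 := mul_pos (hpos (t₀ / 2) (by linarith) (by linarith) j) (Real.exp_pos (M * (t₀ / 2)))
  have h3 := mul_nonpos_of_nonpos_of_nonneg hj' (Real.exp_pos (M * t₀)).le
  exact absurd (h2.trans_le h1) h3.not_gt

end RealEstimates

section RadialEquation

variable (D : HOData E)

/-- The Weyl invariant function which equals `(ρ, x)` on the positive chamber. -/
def rootNorm (x : E) : ℝ := 4⁻¹ * ∑ α ∈ D.R, D.k α * |⟪α, x⟫|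

/-- A bounded Weyl invariant function, used to absorb the terms decaying away from the walls. -/
def damping (x : E) : ℝ := ∑ α ∈ D.R, (1 - Real.exp (-|⟪α, x⟫| / 4))

/-- The right hand side of the equation satisfied by `G₀` in the radial direction. -/
def radialOp (F : E → ℝ) (x : E) : ℝ :=
  ∑ α ∈ D.Rpos, D.k α * (|⟪α, x⟫| / (Real.exp |⟪α, x⟫| - 1) * (F (rRefl α x) - F x)
    + max ⟪α, x⟫ 0 * F (rRefl α x)) - rootNorm D x * F x

lemma rootNorm_eq_sum_pos (x : E) :
    rootNorm D x = 2⁻¹ * ∑ α ∈ D.Rpos, D.k α * |⟪α, x⟫| := by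
  rw [rootNorm, sum_roots_of_even D (fun α => D.k α * |⟪α, x⟫|)]
  · ring
  · intro α hα
    rw [k_neg D hα, inner_neg_left, abs_neg]

lemma rootNorm_rRefl {α : E} (hα : α ∈ D.R) (x : E) : rootNorm D (rRefl α x) = rootNorm D x := by
  rw [rootNorm, rootNorm, ← sum_roots_rRefl D hα (fun β => D.k β * |⟪β, x⟫|)]
  congr 1
  refine Finset.sum_congr rfl fun β hβ => ?_
  rw [D.k_inv α hα β hβ, rRefl_inner]

lemma damping_rRefl {α : E} (hα : α ∈ D.R) (x : E) : damping D (rRefl α x) = damping D x := by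
  rw [damping, damping, ← sum_roots_rRefl D hα (fun β => 1 - Real.exp (-|⟪β, x⟫| / 4))]
  refine Finset.sum_congr rfl fun β _ => ?_
  rw [rRefl_inner]

lemma weylGroup_invariant {X : Type*} {F : E → X}
    (hF : ∀ α ∈ D.R, ∀ x, F (rRefl α x) = F x) (w : weylGroup D) (x : E) : F (w.1 x) = F x := by
  obtain ⟨w, hw⟩ := w
  dsimp only
  induction hw using Subgroup.closure_induction generalizing x with
  | mem w h =>
    obtain ⟨α, hα, h⟩ := h
    rw [h, hF α hα]
  | one => rfl
  | mul v w _ _ hv hw => exact (hv (w x)).trans (hw x)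
  | inv w _ hw => exact (hw (w⁻¹ x)).symm.trans (congrArg F (w.apply_symm_apply x))

lemma HORegular_rRefl {α : E} (hα : α ∈ D.R) (x : E) :
    HORegular D (rRefl α x) = HORegular D x := by
  have h : ∀ x, HORegular D x → HORegular D (rRefl α x) := fun x hx β hβ => by
    rw [← rRefl_inner]
    exact hx _ (D.refl_mem α hα β hβ)
  refine propext ⟨fun hx => ?_, h x⟩
  have := h _ hx
  rwa [rRefl_rRefl (D.root_ne_zero α hα)] at this

lemma rho_inner_eq_rootNorm {x : E} (hx : x ∈ closure (posChamber D)) :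
    ⟪rhoHO D, x⟫ = rootNorm D x := by
  rw [rootNorm_eq_sum_pos, rhoHO, real_inner_smul_left, sum_inner]
  congr 1
  refine Finset.sum_congr rfl fun α hα => ?_
  have hcl : IsClosed {x : E | 0 ≤ ⟪α, x⟫} := isClosed_le continuous_const (by fun_prop)
  have h : 0 ≤ ⟪α, x⟫ := closure_minimal (fun y hy => (hy α hα).le) hcl hx
  rw [abs_of_nonneg h, real_inner_smul_left]

lemma damping_nonneg (x : E) : 0 ≤ damping D x :=
  Finset.sum_nonneg fun α _ => by
    rw [sub_nonneg, Real.exp_le_one_iff]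
    have := abs_nonneg ⟪α, x⟫
    linarith

lemma damping_le (x : E) : damping D x ≤ D.R.card := by
  rw [damping, Finset.card_eq_sum_ones, Nat.cast_sum]
  refine Finset.sum_le_sum fun α _ => ?_
  rw [Nat.cast_one]
  linarith [Real.exp_pos (-|⟪α, x⟫| / 4)]

lemma div_one_sub_exp_neg {a : ℝ} (ha : a ≠ 0) :
    a / (1 - Real.exp (-a)) = |a| / (Real.exp |a| - 1) + max a 0 := by
  rcases ha.lt_or_gt with h | h
  · rw [abs_of_neg h, max_eq_right h.le, add_zero, ← neg_div_neg_eq, neg_sub]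
  · have h1 : 0 < Real.exp a - 1 := by
      have := Real.add_one_lt_exp ha
      linarith
    rw [abs_of_pos h, max_eq_left h.le, Real.exp_neg]
    have h2 := Real.exp_pos a
    have h3 : 1 - (Real.exp a)⁻¹ = (Real.exp a - 1) / Real.exp a := by
      field_simp
    rw [h3]
    field_simp
    ring

lemma fderiv_apply_self {G : E → ℝ} (hG : IsOpdamR D 0 G) {x : E} (hx : HORegular D x) :
    fderiv ℝ G x x = radialOp D G x := by
  have hρ : ⟪rhoHO D, x⟫ = ∑ α ∈ D.Rpos, D.k α * max ⟪α, x⟫ 0 - rootNorm D x := by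
    rw [rootNorm_eq_sum_pos, rhoHO, real_inner_smul_left, sum_inner, Finset.mul_sum,
      Finset.mul_sum, ← Finset.sum_sub_distrib]
    refine Finset.sum_congr rfl fun α _ => ?_
    rw [real_inner_smul_left]
    rcases le_total 0 ⟪α, x⟫ with h | h
    · rw [abs_of_nonneg h, max_eq_left h]
      ring
    · rw [abs_of_nonpos h, max_eq_right h]
      ring
  rw [hG.2.2 x x hx, add_zero, hρ, radialOp, sub_mul, ← add_sub_assoc, Finset.sum_mul,
    ← Finset.sum_add_distrib]
  congr 1
  refine Finset.sum_congr rfl fun α hα => ?_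
  rw [mul_div_assoc, div_one_sub_exp_neg (hx α (D.pos_subset hα))]
  ring

lemma radialOp_sub (F G : E → ℝ) (x : E) :
    radialOp D (fun y => F y - G y) x = radialOp D F x - radialOp D G x := by
  simp only [radialOp]
  rw [sub_sub_sub_comm, ← Finset.sum_sub_distrib]
  congr 1
  · exact Finset.sum_congr rfl fun α _ => by ring
  · ring

lemma radialOp_const_mul (c : ℝ) (F : E → ℝ) (x : E) :
    radialOp D (fun y => c * F y) x = c * radialOp D F x := by
  simp only [radialOp, mul_sub, Finset.mul_sum]
  congr 1
  · exact Finset.sum_congr rfl fun α _ => by ring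
  · ring

lemma div_exp_sub_one_nonneg (a : ℝ) : 0 ≤ |a| / (Real.exp |a| - 1) := by
  have := Real.add_one_le_exp |a|
  have := abs_nonneg a
  exact div_nonneg this (by linarith)

/-- The off-diagonal coefficients of the radial equation are nonnegative. -/
lemma le_radialOp {F : E → ℝ} {x : E} (hx : 0 ≤ F x) (hr : ∀ α ∈ D.R, 0 ≤ F (rRefl α x)) :
    -(∑ α ∈ D.Rpos, D.k α + rootNorm D x) * F x ≤ radialOp D F x := by
  have h : ∀ α ∈ D.Rpos, -(D.k α * F x) ≤
      D.k α * (|⟪α, x⟫| / (Real.exp |⟪α, x⟫| - 1) * (F (rRefl α x) - F x)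
        + max ⟪α, x⟫ 0 * F (rRefl α x)) := by
    intro α hα
    have hk := (D.k_pos α (D.pos_subset hα)).le
    have hF := hr α (D.pos_subset hα)
    have hq := div_exp_sub_one_nonneg ⟪α, x⟫
    have hq1 : |⟪α, x⟫| / (Real.exp |⟪α, x⟫| - 1) ≤ 1 := by
      have := Real.add_one_le_exp |⟪α, x⟫|
      exact div_le_one_of_le₀ (by linarith) (by linarith [abs_nonneg ⟪α, x⟫])
    have h1 := mul_nonneg hq hF
    have h2 := mul_le_mul_of_nonneg_right hq1 hx
    have h3 := mul_nonneg (le_max_right ⟪α, x⟫ 0) hF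
    rw [← mul_neg]
    exact mul_le_mul_of_nonneg_left (by linarith) hk
  have := Finset.sum_le_sum h
  rw [radialOp, Finset.sum_neg_distrib, ← Finset.sum_mul] at *
  linarith

end RadialEquation

section Barrier

variable (D : HOData E) (A B : ℝ)

/-- The barrier function compared with `G₀`. -/
def barrier (x : E) : ℝ := Real.exp (B * damping D x - rootNorm D x) * posProd D A x

/-- The logarithmic radial derivative of the barrier function. -/
def barrierLogDeriv (x : E) : ℝ :=
  B * (4⁻¹ * ∑ α ∈ D.R, |⟪α, x⟫| * Real.exp (-|⟪α, x⟫| / 4)) - rootNorm D x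
    + A * ∑ α ∈ Rpos0 D, max ⟪α, x⟫ 0 / (1 + A * max ⟪α, x⟫ 0)

variable {A B}

lemma barrier_zero : barrier D A B 0 = 1 := by
  simp [barrier, damping, rootNorm, posProd]

lemma continuous_posProd : Continuous (posProd D A) := by
  unfold posProd
  fun_prop

lemma continuous_rootNorm : Continuous (rootNorm D) := by
  unfold rootNorm
  fun_prop

lemma continuous_barrier : Continuous (barrier D A B) := by
  have := continuous_posProd D (A := A)
  have := continuous_rootNorm D
  have : Continuous (damping D) := by
    unfold damping
    fun_prop
  unfold barrier
  fun_prop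

lemma abs_inner_smul {t : ℝ} (ht : 0 < t) (α y : E) : |⟪α, t • y⟫| = t * |⟪α, y⟫| := by
  rw [real_inner_smul_right, abs_mul, abs_of_pos ht]

lemma max_inner_smul {t : ℝ} (ht : 0 < t) (α y : E) :
    max ⟪α, t • y⟫ 0 = t * max ⟪α, y⟫ 0 := by
  rw [real_inner_smul_right, mul_max_of_nonneg _ _ ht.le, mul_zero]

lemma rootNorm_smul {t : ℝ} (ht : 0 < t) (y : E) : rootNorm D (t • y) = t * rootNorm D y := by
  simp only [rootNorm, abs_inner_smul ht, Finset.mul_sum]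
  exact Finset.sum_congr rfl fun α _ => by ring

lemma hasDerivAt_barrier (hA : 0 ≤ A) (y : E) {t : ℝ} (ht : 0 < t) :
    HasDerivAt (fun s : ℝ => barrier D A B (s • y))
      (t⁻¹ * (barrier D A B (t • y) * barrierLogDeriv D A B (t • y))) t := by
  have hN : HasDerivAt (fun s : ℝ => rootNorm D (s • y)) (rootNorm D y) t := by
    have h1 : HasDerivAt (fun s : ℝ => s * rootNorm D y) (1 * rootNorm D y) t :=
      (hasDerivAt_id' t).mul_const _
    rw [one_mul] at h1
    refine h1.congr_of_eventuallyEq ?_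
    filter_upwards [lt_mem_nhds ht] with s hs using rootNorm_smul D hs y
  have hd : HasDerivAt (fun s : ℝ => damping D (s • y))
      (∑ α ∈ D.R, 4⁻¹ * (|⟪α, y⟫| * Real.exp (-(t * |⟪α, y⟫|) / 4))) t := by
    have h1 : HasDerivAt (fun s : ℝ => ∑ α ∈ D.R, (1 - Real.exp (-(s * |⟪α, y⟫|) / 4)))
        (∑ α ∈ D.R, 4⁻¹ * (|⟪α, y⟫| * Real.exp (-(t * |⟪α, y⟫|) / 4))) t := by
      refine HasDerivAt.fun_sum fun α _ => ?_
      have h2 := ((((hasDerivAt_id' t).mul_const |⟪α, y⟫|).fun_neg.div_const 4).exp).const_sub 1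
      convert h2 using 1
      ring
    refine h1.congr_of_eventuallyEq ?_
    filter_upwards [lt_mem_nhds ht] with s hs
    simp only [damping, abs_inner_smul hs]
  have hP : HasDerivAt (fun s : ℝ => posProd D A (s • y))
      (posProd D A (t • y) *
        ∑ α ∈ Rpos0 D, A * max ⟪α, y⟫ 0 / (1 + A * (t * max ⟪α, y⟫ 0))) t := by
    have h1 : HasDerivAt (fun s : ℝ => ∏ α ∈ Rpos0 D, (1 + A * (s * max ⟪α, y⟫ 0)))
        (∑ α ∈ Rpos0 D, (∏ β ∈ (Rpos0 D).erase α, (1 + A * (t * max ⟪β, y⟫ 0))) •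
          (A * max ⟪α, y⟫ 0)) t := by
      refine HasDerivAt.fun_finsetProd fun α _ => ?_
      have h2 := (((hasDerivAt_id' t).mul_const (max ⟪α, y⟫ 0)).const_mul A).const_add 1
      rwa [one_mul] at h2
    have h3 : posProd D A (t • y) *
        ∑ α ∈ Rpos0 D, A * max ⟪α, y⟫ 0 / (1 + A * (t * max ⟪α, y⟫ 0)) =
        ∑ α ∈ Rpos0 D, (∏ β ∈ (Rpos0 D).erase α, (1 + A * (t * max ⟪β, y⟫ 0))) •
          (A * max ⟪α, y⟫ 0) := by
      rw [Finset.mul_sum]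
      refine Finset.sum_congr rfl fun α hα => ?_
      simp only [posProd, max_inner_smul ht]
      rw [← Finset.mul_prod_erase _ _ hα, smul_eq_mul]
      have : 0 < 1 + A * (t * max ⟪α, y⟫ 0) := by positivity
      field_simp
    rw [h3]
    refine h1.congr_of_eventuallyEq ?_
    filter_upwards [lt_mem_nhds ht] with s hs
    simp only [posProd, max_inner_smul hs]
  have h := ((hd.const_mul B).sub hN).exp.mul hP
  refine h.congr_deriv ?_
  have e1 : ∑ α ∈ D.R, |⟪α, t • y⟫| * Real.exp (-|⟪α, t • y⟫| / 4) =
      t * ∑ α ∈ D.R, |⟪α, y⟫| * Real.exp (-(t * |⟪α, y⟫|) / 4) := by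
    simp only [abs_inner_smul ht, Finset.mul_sum, mul_assoc]
  have e2 : ∑ α ∈ Rpos0 D, max ⟪α, t • y⟫ 0 / (1 + A * max ⟪α, t • y⟫ 0) =
      t * ∑ α ∈ Rpos0 D, max ⟪α, y⟫ 0 / (1 + A * (t * max ⟪α, y⟫ 0)) := by
    simp only [max_inner_smul ht, Finset.mul_sum, mul_div_assoc]
  rw [barrierLogDeriv, e1, e2, rootNorm_smul D ht, ← Finset.mul_sum]
  simp only [mul_div_assoc, ← Finset.mul_sum]
  simp only [barrier, Pi.sub_apply, rootNorm_smul D ht]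
  field_simp

lemma radialOp_barrier (x : E) :
    radialOp D (barrier D A B) x = Real.exp (B * damping D x - rootNorm D x) *
      radialOp D (posProd D A) x := by
  simp only [radialOp, mul_sub, Finset.mul_sum]
  congr 1
  · refine Finset.sum_congr rfl fun α hα => ?_
    simp only [barrier, damping_rRefl D (D.pos_subset hα), rootNorm_rRefl D (D.pos_subset hα)]
    ring
  · simp only [barrier]
    ring

lemma exists_posProd_variation (hA : 0 ≤ A) :
    ∃ K : ℝ, 0 ≤ K ∧ ∀ α ∈ D.R, ∀ x,
      |⟪α, x⟫| / (Real.exp |⟪α, x⟫| - 1) * |posProd D A (rRefl α x) - posProd D A x| ≤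
        K * (|⟪α, x⟫| * Real.exp (-|⟪α, x⟫| / 4)) * posProd D A x := by
  obtain ⟨c, hc, hpow⟩ := exists_posProd_rRefl_le_pow D hA
  obtain ⟨K, hK, hKle⟩ := exists_pow_sub_one_le (Rpos0 D).card hc
  refine ⟨K, hK, fun α hα x => ?_⟩
  rcases (abs_nonneg ⟪α, x⟫).eq_or_lt with h0 | h0
  · simp [← h0]
  have hu := posProd_pos D hA x
  have hur := posProd_pos D hA (rRefl α x)
  have h1 := hpow α hα x
  have h2 := hpow α hα (rRefl α x)
  rw [rRefl_rRefl (D.root_ne_zero α hα), ← rRefl_inner, rRefl_self (D.root_ne_zero α hα),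
    inner_neg_left, abs_neg] at h2
  have hz : 1 ≤ (1 + c * |⟪α, x⟫|) ^ (Rpos0 D).card :=
    one_le_pow₀ (by linarith [mul_nonneg hc h0.le])
  have h3 := hKle _ h0
  set z := (1 + c * |⟪α, x⟫|) ^ (Rpos0 D).card
  have h4 : |posProd D A (rRefl α x) - posProd D A x| ≤ (z - 1) * posProd D A x := by
    rw [abs_le]
    constructor
    · rcases le_total (posProd D A x) (posProd D A (rRefl α x)) with h | h
      · nlinarith
      · nlinarith
    · linarith
  calc _ ≤ |⟪α, x⟫| / (Real.exp |⟪α, x⟫| - 1) * ((z - 1) * posProd D A x) :=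
        mul_le_mul_of_nonneg_left h4 (div_exp_sub_one_nonneg _)
    _ = |⟪α, x⟫| / (Real.exp |⟪α, x⟫| - 1) * (z - 1) * posProd D A x := by ring
    _ ≤ _ := mul_le_mul_of_nonneg_right h3 hu.le

lemma sum_k_mul_le (F : E → ℝ) (hF : ∀ α, 0 ≤ F α) :
    ∑ α ∈ D.Rpos, D.k α * F α ≤ (∑ α ∈ D.Rpos, D.k α) * ∑ α ∈ D.R, F α := by
  rw [Finset.sum_mul]
  refine Finset.sum_le_sum fun α hα => ?_
  refine mul_le_mul_of_nonneg_left ?_ (D.k_pos α (D.pos_subset hα)).le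
  exact Finset.single_le_sum (f := F) (fun β _ => hF β) (D.pos_subset hα)

lemma exists_supersolution :
    ∃ A B : ℝ, 0 < A ∧ ∀ x, radialOp D (barrier D A B) x ≤
      barrier D A B x * barrierLogDeriv D A B x := by
  set κ := ∑ α ∈ D.Rpos, D.k α with hκ
  have hκ0 : 0 ≤ κ := Finset.sum_nonneg fun α hα => (D.k_pos α (D.pos_subset hα)).le
  obtain ⟨K, hK, hvar⟩ := exists_posProd_variation D (A := 2 * κ + 1) (by positivity)
  set A := 2 * κ + 1 with hAdef
  have hA : 0 < A := by positivity
  refine ⟨A, 4 * (κ * K), hA, fun x => ?_⟩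
  rw [radialOp_barrier, barrier, mul_assoc (Real.exp _)]
  refine mul_le_mul_of_nonneg_left ?_ (Real.exp_pos _).le
  have hu := posProd_pos D hA.le x
  set S := ∑ α ∈ Rpos0 D, max ⟪α, x⟫ 0 / (1 + A * max ⟪α, x⟫ 0) with hS
  have hSnn : ∀ α ∈ Rpos0 D, 0 ≤ max ⟪α, x⟫ 0 / (1 + A * max ⟪α, x⟫ 0) :=
    fun α _ => by positivity
  have hS0 : 0 ≤ S := Finset.sum_nonneg hSnn
  have hnil : ∀ α ∈ D.Rpos, max ⟪α, x⟫ 0 * posProd D A (rRefl α x) ≤ 2 * S * posProd D A x := by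
    intro α hα
    obtain ⟨β, hβ, hαβ⟩ := exists_indivisible D hα
    have hr : rRefl α x = rRefl β x := by
      rcases hαβ with h | h
      · rw [h]
      · rw [h, rRefl_smul_left two_ne_zero]
    have hm : max ⟪α, x⟫ 0 ≤ 2 * max ⟪β, x⟫ 0 := by
      have := le_max_right ⟪β, x⟫ 0
      have := le_max_left ⟪β, x⟫ 0
      rcases hαβ with h | h
      · rw [h]
        linarith
      · rw [h, real_inner_smul_left]
        exact max_le (by linarith) (by linarith)
    have hur := posProd_pos D hA.le (rRefl α x)
    refine (mul_le_mul_of_nonneg_right hm hur.le).trans ?_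
    rw [mul_assoc, mul_assoc]
    refine mul_le_mul_of_nonneg_left ?_ zero_le_two
    rcases le_or_gt ⟪β, x⟫ 0 with h | h
    · rw [max_eq_right h, zero_mul]
      positivity
    · have h1 := posProd_rRefl_mul_le D hA.le hβ h.le
      have h2 := Finset.single_le_sum hSnn hβ
      rw [max_eq_left h.le] at h2 ⊢
      rw [hr]
      have hp : 0 < 1 + A * ⟪β, x⟫ := by positivity
      calc ⟪β, x⟫ * posProd D A (rRefl β x)
          = ⟪β, x⟫ / (1 + A * ⟪β, x⟫) * (posProd D A (rRefl β x) * (1 + A * ⟪β, x⟫)) := by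
            field_simp
        _ ≤ ⟪β, x⟫ / (1 + A * ⟪β, x⟫) * posProd D A x :=
            mul_le_mul_of_nonneg_left h1 (by positivity)
        _ ≤ _ := mul_le_mul_of_nonneg_right h2 hu.le
  have hterm : ∀ α ∈ D.Rpos, D.k α * (|⟪α, x⟫| / (Real.exp |⟪α, x⟫| - 1) *
      (posProd D A (rRefl α x) - posProd D A x) + max ⟪α, x⟫ 0 * posProd D A (rRefl α x)) ≤
      D.k α * (|⟪α, x⟫| * Real.exp (-|⟪α, x⟫| / 4)) * (K * posProd D A x)
        + D.k α * (2 * S * posProd D A x) := by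
    intro α hα
    rw [mul_assoc, ← mul_add]
    refine mul_le_mul_of_nonneg_left (add_le_add ?_ (hnil α hα)) (D.k_pos α (D.pos_subset hα)).le
    have h1 := hvar α (D.pos_subset hα) x
    have h2 := mul_le_mul_of_nonneg_left
      (le_abs_self (posProd D A (rRefl α x) - posProd D A x)) (div_exp_sub_one_nonneg ⟪α, x⟫)
    linarith
  have hsum := Finset.sum_le_sum hterm
  rw [Finset.sum_add_distrib, ← Finset.sum_mul, ← Finset.sum_mul, ← hκ] at hsum
  have hk := mul_le_mul_of_nonneg_right
    (sum_k_mul_le D (fun α => |⟪α, x⟫| * Real.exp (-|⟪α, x⟫| / 4)) (fun α => by positivity))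
    (mul_nonneg hK hu.le)
  rw [← hκ] at hk
  have hSu := mul_nonneg hS0 hu.le
  rw [radialOp, barrierLogDeriv, ← hS]
  have : A * S * posProd D A x = 2 * κ * (S * posProd D A x) + S * posProd D A x := by
    rw [hAdef]; ring
  linarith

lemma exists_pos_le_k : ∃ k₀ : ℝ, 0 < k₀ ∧ ∀ α ∈ D.R, k₀ ≤ D.k α := by
  rcases D.R.eq_empty_or_nonempty with h | h
  · exact ⟨1, one_pos, by simp [h]⟩
  · obtain ⟨β, hβ, hmin⟩ := D.R.exists_min_image D.k h
    exact ⟨D.k β, D.k_pos β hβ, hmin⟩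

/-- Values at the simple roots control values at all indivisible positive roots. -/
lemma exists_simple_control {S : Finset E}
    (hspan : ∀ γ ∈ Rpos0 D, ∃ n : E → ℝ, (∀ α, 0 ≤ n α) ∧ γ = ∑ α ∈ S, n α • α) :
    ∃ C : ℝ, 0 ≤ C ∧ ∀ A : ℝ, 0 ≤ A → ∀ x : E,
      ∑ γ ∈ Rpos0 D, max ⟪γ, x⟫ 0 / (1 + A * max ⟪γ, x⟫ 0) ≤
        C * ∑ α ∈ S, max ⟪α, x⟫ 0 / (1 + A * max ⟪α, x⟫ 0) := by
  choose! n hn hγ using hspan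
  refine ⟨∑ γ ∈ Rpos0 D, ∑ α ∈ S, (1 + n γ α), ?_, fun A hA x => ?_⟩
  · exact Finset.sum_nonneg fun γ hγ' => Finset.sum_nonneg fun α _ => by linarith [hn γ hγ' α]
  rw [Finset.sum_mul]
  refine Finset.sum_le_sum fun γ hγ' => ?_
  have hnn : ∀ α ∈ S, 0 ≤ n γ α * max ⟪α, x⟫ 0 := fun α _ =>
    mul_nonneg (hn γ hγ' α) (le_max_right _ _)
  have h1 : max ⟪γ, x⟫ 0 ≤ ∑ α ∈ S, n γ α * max ⟪α, x⟫ 0 := by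
    refine max_le ?_ (Finset.sum_nonneg hnn)
    conv_lhs => rw [hγ γ hγ', sum_inner]
    refine Finset.sum_le_sum fun α _ => ?_
    rw [real_inner_smul_left]
    exact mul_le_mul_of_nonneg_left (le_max_left _ _) (hn γ hγ' α)
  set T := ∑ α ∈ S, n γ α * max ⟪α, x⟫ 0 with hT
  have hT0 : 0 ≤ T := Finset.sum_nonneg hnn
  have h2 : max ⟪γ, x⟫ 0 / (1 + A * max ⟪γ, x⟫ 0) ≤ T / (1 + A * T) := by
    have := le_max_right ⟪γ, x⟫ 0
    rw [div_le_div_iff₀ (by positivity) (by positivity)]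
    linarith
  refine h2.trans ?_
  conv_lhs => rw [hT, Finset.sum_div, ← hT]
  rw [Finset.sum_mul]
  refine Finset.sum_le_sum fun α hα => ?_
  have hp : 0 ≤ max ⟪α, x⟫ 0 := le_max_right _ _
  have hs := Finset.single_le_sum hnn hα
  have h3 : n γ α * max ⟪α, x⟫ 0 / (1 + A * T) ≤
      (1 + n γ α) * (max ⟪α, x⟫ 0 / (1 + A * max ⟪α, x⟫ 0)) := by
    rw [← mul_div_assoc, div_le_div_iff₀ (by positivity) (by positivity)]
    have h4 : n γ α * (1 + A * max ⟪α, x⟫ 0) ≤ (1 + n γ α) * (1 + A * T) := by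
      have := mul_le_mul_of_nonneg_left hs hA
      have := mul_nonneg (hn γ hγ' α) (mul_nonneg hA hT0)
      linarith
    have := mul_le_mul_of_nonneg_right h4 hp
    linarith
  refine h3.trans (mul_le_mul_of_nonneg_left ?_ (by linarith [hn γ hγ' α]))
  exact Finset.single_le_sum (f := fun α => max ⟪α, x⟫ 0 / (1 + A * max ⟪α, x⟫ 0))
    (fun α _ => by positivity) hα

lemma exists_subsolution :
    ∃ A B : ℝ, 0 < A ∧ ∀ x, barrier D A B x * barrierLogDeriv D A B x ≤
      radialOp D (barrier D A B) x := by
  obtain ⟨S, hS, hsimple, hspan⟩ := exists_simple D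
  obtain ⟨C, hC, hcontrol⟩ := exists_simple_control D hspan
  obtain ⟨k₀, hk₀, hk₀le⟩ := exists_pos_le_k D
  set κ := ∑ α ∈ D.Rpos, D.k α with hκ
  obtain ⟨K, hK, hvar⟩ := exists_posProd_variation D (A := k₀ / (C + 1)) (by positivity)
  set A := k₀ / (C + 1) with hAdef
  have hA : 0 < A := by positivity
  have hAC : A * C ≤ k₀ := by
    rw [hAdef, div_mul_eq_mul_div, div_le_iff₀ (by positivity)]
    linarith
  refine ⟨A, -(4 * (κ * K)), hA, fun x => ?_⟩
  rw [radialOp_barrier, barrier, mul_assoc (Real.exp _)]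
  refine mul_le_mul_of_nonneg_left ?_ (Real.exp_pos _).le
  have hu := posProd_pos D hA.le x
  have hctl := hcontrol A hA.le x
  set T := ∑ α ∈ S, max ⟪α, x⟫ 0 / (1 + A * max ⟪α, x⟫ 0) with hT
  have hT0 : 0 ≤ T := Finset.sum_nonneg fun α _ => by positivity
  have hnil : k₀ * T * posProd D A x ≤
      ∑ α ∈ D.Rpos, D.k α * (max ⟪α, x⟫ 0 * posProd D A (rRefl α x)) := by
    rw [hT, Finset.mul_sum, Finset.sum_mul]
    refine le_trans (Finset.sum_le_sum fun α hα => ?_)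
      (Finset.sum_le_sum_of_subset_of_nonneg (hS.trans (Rpos0_subset D)) fun α hα _ => ?_)
    · have hur := posProd_pos D hA.le (rRefl α x)
      have hα0 := hS hα
      rw [mul_assoc]
      refine mul_le_mul (hk₀le α (D.pos_subset (Rpos0_subset D hα0))) ?_ (by positivity)
        (D.k_pos α (D.pos_subset (Rpos0_subset D hα0))).le
      rcases le_or_gt ⟪α, x⟫ 0 with h | h
      · simp [max_eq_right h]
      · rw [max_eq_left h.le, ← posProd_rRefl_simple D hα0 (hsimple α hα) h.le]
        have hp : 0 < 1 + A * ⟪α, x⟫ := by positivity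
        apply le_of_eq
        field_simp
    · have hur := posProd_pos D hA.le (rRefl α x)
      have := D.k_pos α (D.pos_subset hα)
      positivity
  have hterm : ∀ α ∈ D.Rpos,
      D.k α * (max ⟪α, x⟫ 0 * posProd D A (rRefl α x)) -
        D.k α * (|⟪α, x⟫| * Real.exp (-|⟪α, x⟫| / 4)) * (K * posProd D A x) ≤
      D.k α * (|⟪α, x⟫| / (Real.exp |⟪α, x⟫| - 1) *
      (posProd D A (rRefl α x) - posProd D A x) + max ⟪α, x⟫ 0 * posProd D A (rRefl α x)) := by
    intro α hα
    rw [mul_assoc, ← mul_sub]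
    refine mul_le_mul_of_nonneg_left ?_ (D.k_pos α (D.pos_subset hα)).le
    have h1 := hvar α (D.pos_subset hα) x
    have h2 := mul_le_mul_of_nonneg_left
      (neg_abs_le (posProd D A (rRefl α x) - posProd D A x)) (div_exp_sub_one_nonneg ⟪α, x⟫)
    linarith
  have hsum := Finset.sum_le_sum hterm
  rw [Finset.sum_sub_distrib, ← Finset.sum_mul] at hsum
  have hk := mul_le_mul_of_nonneg_right
    (sum_k_mul_le D (fun α => |⟪α, x⟫| * Real.exp (-|⟪α, x⟫| / 4)) (fun α => by positivity))
    (mul_nonneg hK hu.le)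
  rw [← hκ] at hk
  have h1 : A * ∑ γ ∈ Rpos0 D, max ⟪γ, x⟫ 0 / (1 + A * max ⟪γ, x⟫ 0) ≤ k₀ * T := by
    have h2 := mul_le_mul_of_nonneg_left hctl hA.le
    have h3 := mul_le_mul_of_nonneg_right hAC hT0
    linarith
  have h2 := mul_le_mul_of_nonneg_right h1 hu.le
  rw [radialOp, barrierLogDeriv]
  linarith

end Barrier

section Comparison

variable (D : HOData E)

/-- Positivity of radial supersolutions. -/
lemma pos_of_radialOp_le [Fintype (weylGroup D)] {F F' : E → ℝ} (hcont : Continuous F)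
    (h0 : 0 < F 0)
    (hd : ∀ y, HORegular D y → ∀ t : ℝ, 0 < t →
      HasDerivAt (fun s : ℝ => F (s • y)) (t⁻¹ * F' (t • y)) t)
    (hle : ∀ x, HORegular D x → radialOp D F x ≤ F' x) {y : E} (hy : HORegular D y) : 0 < F y := by
  have hreg : ∀ w : weylGroup D, HORegular D (w.1 y) := fun w =>
    (weylGroup_invariant D (F := HORegular D) (fun α hα x => HORegular_rRefl D hα x) w y).mpr hy
  have hκ : 0 ≤ ∑ α ∈ D.Rpos, D.k α :=
    Finset.sum_nonneg fun α hα => (D.k_pos α (D.pos_subset hα)).le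
  have h := pos_of_cooperative (fun (w : weylGroup D) t => F (t • w.1 y))
    (fun w t => t⁻¹ * F' (t • w.1 y)) (fun w => rootNorm D (w.1 y)) hκ
    (fun w => hcont.comp (by fun_prop)) (fun w => by simpa using h0)
    (fun w t ht => hd _ (hreg w) t ht) ?_ 1 zero_le_one
  · simpa using h
  intro t ht hnn w
  have hregt : HORegular D (t • w.1 y) := fun α hα => by
    rw [real_inner_smul_right]
    exact mul_ne_zero ht.ne' (hreg w α hα)
  have h1 := le_radialOp D (F := F) (hnn w) fun α hα => by
    obtain ⟨s, hs⟩ := exists_weylGroup_eq_rRefl D hα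
    rw [rRefl_smul, ← hs]
    exact hnn (s * w)
  have h2 := mul_le_mul_of_nonneg_left (h1.trans (hle _ hregt)) (inv_nonneg.2 ht.le)
  rw [rootNorm_smul D ht] at h2
  refine le_trans (le_of_eq ?_) h2
  field_simp

lemma hasDerivAt_opdam {G : E → ℝ} (hG : IsOpdamR D 0 G) {y : E} (hy : HORegular D y) {t : ℝ}
    (ht : 0 < t) :
    HasDerivAt (fun s : ℝ => G (s • y)) (t⁻¹ * radialOp D G (t • y)) t := by
  have hreg : HORegular D (t • y) := fun α hα => by
    rw [real_inner_smul_right]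
    exact mul_ne_zero ht.ne' (hy α hα)
  have h1 := (hG.1 (t • y) (Set.mem_univ _)).differentiableAt.hasFDerivAt
  have h2 : HasDerivAt (fun s : ℝ => s • y) ((1:ℝ) • y) t := (hasDerivAt_id' t).smul_const y
  have h3 := h1.comp_hasDerivAt t h2
  rw [← fderiv_apply_self D hG hreg, map_smul, smul_eq_mul, inv_mul_cancel_left₀ ht.ne']
  rw [one_smul] at h3
  exact h3

lemma closure_regular (x : E) : x ∈ closure {y | HORegular D y} := by
  obtain ⟨u, hu⟩ := D.pos_char
  have hne : ∀ α ∈ D.R, ⟪α, u⟫ ≠ 0 := by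
    intro α hα
    rcases D.pos_or_neg α hα with h | h
    · exact ((hu α hα).1 h).ne'
    · have := (hu _ (D.neg_mem α hα)).1 h
      rw [inner_neg_left] at this
      exact (neg_pos.1 this).ne
  have ht : Filter.Tendsto (fun ε : ℝ => x + ε • u) (nhdsWithin 0 {0}ᶜ) (nhds x) := by
    have : Continuous fun ε : ℝ => x + ε • u := by fun_prop
    simpa using (this.tendsto 0).mono_left nhdsWithin_le_nhds
  refine mem_closure_of_tendsto ht ?_
  simp only [HORegular, Set.mem_ofPred_eq, Filter.eventually_all_finset]
  intro α hα
  rcases eq_or_ne ⟪α, x⟫ 0 with h | h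
  · filter_upwards [self_mem_nhdsWithin] with ε hε
    rw [inner_add_right, h, zero_add, real_inner_smul_right]
    exact mul_ne_zero hε (hne α hα)
  · have hc : Continuous fun y : E => ⟪α, y⟫ := by fun_prop
    exact ((hc.tendsto x).comp ht).eventually_ne h

lemma le_of_le_on_regular {F G : E → ℝ} (hF : Continuous F) (hG : Continuous G)
    (h : ∀ x, HORegular D x → F x ≤ G x) (x : E) : F x ≤ G x :=
  closure_minimal (s := {y | HORegular D y}) h (isClosed_le hF hG) (closure_regular D x)

variable {A B : ℝ}

lemma le_opdam_of_subsolution [Fintype (weylGroup D)] {G : E → ℝ} (hG : IsOpdamR D 0 G)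
    (hA : 0 < A) (hsub : ∀ x, barrier D A B x * barrierLogDeriv D A B x ≤
      radialOp D (barrier D A B) x) (x : E) : 2⁻¹ * barrier D A B x ≤ G x := by
  have hGc : Continuous G := continuousOn_univ.1 hG.1.continuousOn
  have hv := continuous_barrier D (A := A) (B := B)
  refine le_of_le_on_regular D (hv.const_mul 2⁻¹) hGc (fun y hy => ?_) x
  refine sub_nonneg.1 (pos_of_radialOp_le D (F := fun y => G y - 2⁻¹ * barrier D A B y)
    (F' := fun y => radialOp D G y - 2⁻¹ * (barrier D A B y * barrierLogDeriv D A B y))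
    (by fun_prop) ?_ (fun y hy t ht => ?_) (fun y _ => ?_) hy).le
  · rw [hG.2.1, barrier_zero]
    norm_num
  · refine ((hasDerivAt_opdam D hG hy ht).sub
      ((hasDerivAt_barrier D hA.le y ht).const_mul 2⁻¹)).congr_deriv ?_
    ring
  · rw [radialOp_sub, radialOp_const_mul]
    linarith [hsub y]

lemma opdam_le_of_supersolution [Fintype (weylGroup D)] {G : E → ℝ} (hG : IsOpdamR D 0 G)
    (hA : 0 < A) (hsuper : ∀ x, radialOp D (barrier D A B) x ≤
      barrier D A B x * barrierLogDeriv D A B x) (x : E) : G x ≤ 2 * barrier D A B x := by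
  have hGc : Continuous G := continuousOn_univ.1 hG.1.continuousOn
  have hv := continuous_barrier D (A := A) (B := B)
  refine le_of_le_on_regular D hGc (hv.const_mul 2) (fun y hy => ?_) x
  refine sub_nonneg.1 (pos_of_radialOp_le D (F := fun y => 2 * barrier D A B y - G y)
    (F' := fun y => 2 * (barrier D A B y * barrierLogDeriv D A B y) - radialOp D G y)
    (by fun_prop) ?_ (fun y hy t ht => ?_) (fun y _ => ?_) hy).le
  · rw [hG.2.1, barrier_zero]
    norm_num
  · refine (((hasDerivAt_barrier D hA.le y ht).const_mul 2).sub
      (hasDerivAt_opdam D hG hy ht)).congr_deriv ?_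
    ring
  · rw [radialOp_sub, radialOp_const_mul]
    linarith [hsuper y]

lemma barrier_bounds (hA : 0 < A) (x : E) :
    Real.exp (-(|B| * D.R.card)) * min A 1 ^ (Rpos0 D).card *
        (posProd D 1 x * Real.exp (-rootNorm D x)) ≤ barrier D A B x ∧
      barrier D A B x ≤ Real.exp (|B| * D.R.card) * max A 1 ^ (Rpos0 D).card *
        (posProd D 1 x * Real.exp (-rootNorm D x)) := by
  have hBd : |B * damping D x| ≤ |B| * D.R.card := by
    rw [abs_mul, abs_of_nonneg (damping_nonneg D x)]
    exact mul_le_mul_of_nonneg_left (damping_le D x) (abs_nonneg B)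
  have h1 := abs_le.1 hBd
  have hP := posProd_pos D zero_le_one x
  have hmin : 0 < min A 1 := lt_min hA one_pos
  have hlow : min A 1 ^ (Rpos0 D).card * posProd D 1 x ≤ posProd D A x := by
    rw [posProd, posProd, ← Finset.prod_const, ← Finset.prod_mul_distrib]
    refine Finset.prod_le_prod (fun α _ => by positivity) fun α _ => ?_
    have := mul_le_mul_of_nonneg_right (min_le_left A 1) (le_max_right ⟪α, x⟫ 0)
    linarith [min_le_right A 1]
  have hup : posProd D A x ≤ max A 1 ^ (Rpos0 D).card * posProd D 1 x := by
    rw [posProd, posProd, ← Finset.prod_const, ← Finset.prod_mul_distrib]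
    refine Finset.prod_le_prod (fun α _ => by positivity) fun α _ => ?_
    have := mul_le_mul_of_nonneg_right (le_max_left A 1) (le_max_right ⟪α, x⟫ 0)
    linarith [le_max_right A 1]
  have hPA := posProd_pos D hA.le x
  rw [barrier, sub_eq_add_neg, Real.exp_add]
  constructor
  · calc _ = Real.exp (-(|B| * D.R.card)) * Real.exp (-rootNorm D x) *
          (min A 1 ^ (Rpos0 D).card * posProd D 1 x) := by ring
      _ ≤ _ := by
        have := Real.exp_le_exp.2 h1.1
        gcongr
  · calc _ ≤ Real.exp (|B| * D.R.card) * Real.exp (-rootNorm D x) *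
          (max A 1 ^ (Rpos0 D).card * posProd D 1 x) := by
          have := Real.exp_le_exp.2 h1.2
          gcongr
      _ = _ := by ring

lemma posProd_one_eq (x : E) :
    posProd D 1 x = ∏ α ∈ (Rpos0 D).filter (fun α => 0 ≤ ⟪α, x⟫), (1 + ⟪α, x⟫) := by
  rw [posProd, Finset.prod_filter]
  refine Finset.prod_congr rfl fun α _ => ?_
  split_ifs with h
  · rw [max_eq_left h, one_mul]
  · rw [max_eq_right (not_le.1 h).le, mul_zero, add_zero]

end Comparison

/-- sharp global estimate of `G₀` on all of `a`:
`G₀(x) ≍ Π_{α ∈ R₀⁺, (α,x) ≥ 0} (1 + (α,x)) · e^{-(ρ, x⁺)}`, where `x⁺` is the unique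
point of the Weyl orbit of `x` lying in the closed positive chamber. -/
theorem statement7 (D : HOData E) [Fintype (weylGroup D)] (Gzero : E → ℝ)
    (hG0 : IsOpdamR D 0 Gzero) :
    ∃ C c : ℝ, 0 < c ∧ c ≤ C ∧ ∀ x : E, ∀ xplus ∈ closure (posChamber D),
      (∃ w : weylGroup D, w.1 x = xplus) →
      c * ((∏ α ∈ (Rpos0 D).filter (fun α => 0 ≤ ⟪α, x⟫), (1 + ⟪α, x⟫)) *
          Real.exp (-⟪rhoHO D, xplus⟫)) ≤ Gzero x ∧
      Gzero x ≤ C * ((∏ α ∈ (Rpos0 D).filter (fun α => 0 ≤ ⟪α, x⟫), (1 + ⟪α, x⟫)) *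
          Real.exp (-⟪rhoHO D, xplus⟫)) := by
  obtain ⟨A₁, B₁, hA₁, hsub⟩ := exists_subsolution D
  obtain ⟨A₂, B₂, hA₂, hsuper⟩ := exists_supersolution D
  set c := 2⁻¹ * (Real.exp (-(|B₁| * D.R.card)) * min A₁ 1 ^ (Rpos0 D).card) with hc
  set C := 2 * (Real.exp (|B₂| * D.R.card) * max A₂ 1 ^ (Rpos0 D).card) with hC
  have hmin : 0 < min A₁ 1 := lt_min hA₁ one_pos
  refine ⟨max C c, c, by positivity, le_max_right _ _, ?_⟩
  rintro x xplus hxplus ⟨w, rfl⟩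
  rw [rho_inner_eq_rootNorm D hxplus,
    weylGroup_invariant D (fun α hα x => rootNorm_rRefl D hα x) w x, ← posProd_one_eq]
  have hP := posProd_pos D zero_le_one x
  constructor
  · have h1 := (barrier_bounds D (B := B₁) hA₁ x).1
    have h2 := le_opdam_of_subsolution D hG0 hA₁ hsub x
    rw [hc]
    linarith
  · have h1 := (barrier_bounds D (B := B₂) hA₂ x).2
    have h2 := opdam_le_of_supersolution D hG0 hA₂ hsuper x
    refine le_trans ?_ (mul_le_mul_of_nonneg_right (le_max_left C c) (by positivity))
    rw [hC]
    linarith
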